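/- arXiv:2202.10148 — 2 statements merged into one kernel-verified Lean document; each statement's English description precedes it below -/
import Mathlib

section
/- Let n, d, r be positive integers with 1 ≤ d ≤ n, r ≤ d, and r ≤ n−d+1. Let z_1,…,z_r ∈ ℂ be pairwise distinct and nonzero, let b_1,…,b_r ∈ ℂ be all nonzero, and let y ∈ ℂ^n be defined by y_k = Σ_{ℓ=1}^r b_ℓ z_ℓ^k for k = 1,…,n. Then the rank of the Hankelization H(y) is exactly r. -/
open Matrix

noncomputable section

/-- Hankelization of a vector `x ∈ ℂⁿ` with pencil parameter `d`:
the `d × (n-d+1)` matrix with entries `H(x)_{ij} = x_{i+j-1}` (1-based). -/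
def hankel (n d : ℕ) (hd : 1 ≤ d) (hdn : d ≤ n) (x : Fin n → ℂ) :
    Matrix (Fin d) (Fin (n - d + 1)) ℂ :=
  Matrix.of fun i j => x ⟨i.val + j.val, by have := i.2; have := j.2; omega⟩

/-- Frobenius norm of a complex matrix. -/
def frobNorm {m n : ℕ} (A : Matrix (Fin m) (Fin n) ℂ) : ℝ :=
  Real.sqrt (∑ i, ∑ j, ‖A i j‖ ^ 2)

/-- Nuclear norm of a complex matrix: the sum of the square roots of the
eigenvalues of `Aᴴ * A` (i.e. the sum of singular values). -/
def nuclearNorm {m n : ℕ} (A : Matrix (Fin m) (Fin n) ℂ) : ℝ :=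
  ∑ i, Real.sqrt ((Matrix.isHermitian_conjTranspose_mul_self A).eigenvalues i)

/-- The normalized Hankel basis matrix `A_k = H(e_k) / ‖H(e_k)‖_F`. -/
def basisMat (n d : ℕ) (hd : 1 ≤ d) (hdn : d ≤ n) (k : Fin n) :
    Matrix (Fin d) (Fin (n - d + 1)) ℂ :=
  (frobNorm (hankel n d hd hdn (Pi.single k 1)) : ℂ)⁻¹ • hankel n d hd hdn (Pi.single k 1)

end

/-- **Exact rank of the Hankelization of an exponential signal.**
If `y k = ∑ ℓ b ℓ * (z ℓ)^k` for `k = 1, …, n` (1-based), with the `z ℓ`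
pairwise distinct and nonzero, the `b ℓ` nonzero, `r ≤ d` and `r ≤ n - d + 1`,
then `rank H(y) = r`. -/
theorem rank_hankel_eq
    (n d r : ℕ) (hd : 1 ≤ d) (hdn : d ≤ n) (hr : 0 < r)
    (hrd : r ≤ d) (hrn : r ≤ n - d + 1)
    (z b : Fin r → ℂ)
    (hz : Function.Injective z) (hz0 : ∀ ℓ, z ℓ ≠ 0) (hb : ∀ ℓ, b ℓ ≠ 0)
    (y : Fin n → ℂ)
    (hy : ∀ k : Fin n, y k = ∑ ℓ, b ℓ * z ℓ ^ ((k : ℕ) + 1)) :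
    (hankel n d hd hdn y).rank = r := by
  apply le_antisymm
  · have h : hankel n d hd hdn y =
        (Matrix.of fun (i : Fin d) (l : Fin r) => b l * z l ^ (i.val + 1)) *
        (Matrix.of fun (l : Fin r) (j : Fin (n - d + 1)) => z l ^ j.val) := by
      ext i j
      simp only [hankel, Matrix.of_apply, Matrix.mul_apply, hy]
      refine Finset.sum_congr rfl fun l _ => ?_
      ring
    rw [h]
    refine (Matrix.rank_mul_le_left _ _).trans ?_
    simpa using Matrix.rank_le_width
      (Matrix.of fun (i : Fin d) (l : Fin r) => b l * z l ^ (i.val + 1))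
  · have h : (hankel n d hd hdn y).submatrix (Fin.castLE hrd) (Fin.castLE hrn) =
        (vandermonde z)ᵀ * Matrix.diagonal (fun l => b l * z l) * vandermonde z := by
      ext i j
      rw [Matrix.mul_apply]
      simp only [hankel, Matrix.submatrix_apply, Matrix.of_apply,
        Matrix.mul_diagonal, Matrix.transpose_apply, Matrix.vandermonde_apply, hy, Fin.val_castLE]
      refine Finset.sum_congr rfl fun l _ => ?_
      ring
    have hV : (vandermonde z).det ≠ 0 := Matrix.det_vandermonde_ne_zero_iff.mpr hz
    have hdet : ((vandermonde z)ᵀ * Matrix.diagonal (fun l => b l * z l) *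
        vandermonde z).det ≠ 0 := by
      rw [Matrix.det_mul, Matrix.det_mul, Matrix.det_transpose, Matrix.det_diagonal]
      exact mul_ne_zero (mul_ne_zero hV
        (Finset.prod_ne_zero_iff.mpr fun l _ => mul_ne_zero (hb l) (hz0 l))) hV
    have hrk := Matrix.rank_of_isUnit _
      ((Matrix.isUnit_iff_isUnit_det _).mpr (isUnit_iff_ne_zero.mpr hdet))
    rw [← h, Fintype.card_fin] at hrk
    calc r = _ := hrk.symm
      _ ≤ _ := Matrix.rank_submatrix_le _ _ _
end

section
/- (Variational characterization of the nuclear norm) Let A be an m × n complex matrix. Then (i) for every positive integer p and every pair of matrices U ∈ ℂ^{m×p}, V ∈ ℂ^{n×p} with A = U V^H, one has ‖A‖_* ≤ (‖U‖_F² + ‖V‖_F²)/2; and (ii) there exist a positive integer p and matrices U ∈ ℂ^{m×p}, V ∈ ℂ^{n×p} with A = U V^H and ‖A‖_* = (‖U‖_F² + ‖V‖_F²)/2. Consequently, ‖A‖_* = min over all factorizations A = U V^H of (‖U‖_F² + ‖V‖_F²)/2. -/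
open Matrix

theorem nn_frob_sq {m n : ℕ} (M : Matrix (Fin m) (Fin n) ℂ) :
    ((frobNorm M ^ 2 : ℝ) : ℂ) = (Mᴴ * M).trace := by
  unfold frobNorm
  rw [Real.sq_sqrt (by positivity)]
  simp only [Matrix.trace, Matrix.diag, Matrix.mul_apply, Matrix.conjTranspose_apply]
  rw [Finset.sum_comm]
  push_cast
  refine Finset.sum_congr rfl fun i _ => Finset.sum_congr rfl fun j _ => ?_
  rw [← Complex.conj_mul']
  rfl

theorem nn_aux {n : ℕ} {W L M : Matrix (Fin n) (Fin n) ℂ} (h1 : Wᴴ * W = 1)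
    (h : M = W * L * Wᴴ) : Wᴴ * (M * W) = L := by
  rw [h]
  simp only [← Matrix.mul_assoc]
  rw [h1, Matrix.one_mul, Matrix.mul_assoc, h1, Matrix.mul_one]

theorem nn_svd {m n : ℕ} (A : Matrix (Fin m) (Fin n) ℂ) :
    ∃ (W : Matrix (Fin n) (Fin n) ℂ) (s : Fin n → ℝ), Wᴴ * W = 1 ∧ W * Wᴴ = 1 ∧
      (∀ i, 0 ≤ s i) ∧ (A * W)ᴴ * (A * W) = diagonal (fun i => ((s i : ℂ)) ^ 2) ∧
      nuclearNorm A = ∑ i, s i := by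
  let hA := Matrix.isHermitian_conjTranspose_mul_self A
  have h1 : (hA.eigenvectorUnitary : Matrix (Fin n) (Fin n) ℂ)ᴴ * hA.eigenvectorUnitary = 1 :=
    Unitary.coe_star_mul_self hA.eigenvectorUnitary
  refine ⟨hA.eigenvectorUnitary, fun i => Real.sqrt (hA.eigenvalues i), h1,
    Unitary.coe_mul_star_self hA.eigenvectorUnitary, fun i => Real.sqrt_nonneg _, ?_, rfl⟩
  have h := hA.spectral_theorem
  rw [Unitary.conjStarAlgAut_apply, Matrix.star_eq_conjTranspose] at h
  rw [conjTranspose_mul, Matrix.mul_assoc, ← Matrix.mul_assoc Aᴴ, nn_aux h1 h]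
  congr 1
  funext i
  have := Real.sq_sqrt (eigenvalues_conjTranspose_mul_self_nonneg A i)
  have h2 := congrArg (fun x : ℝ => (x : ℂ)) this.symm
  simp only [Complex.ofReal_pow] at h2
  exact h2

theorem nn_diag_conj {n : ℕ} (s : Fin n → ℝ) :
    (diagonal (fun i => (s i : ℂ)))ᴴ = diagonal (fun i => (s i : ℂ)) := by
  rw [diagonal_conjTranspose]
  congr 1
  funext i
  simp

theorem nn_upper {m n p : ℕ} (A : Matrix (Fin m) (Fin n) ℂ)
    (U : Matrix (Fin m) (Fin p) ℂ) (V : Matrix (Fin n) (Fin p) ℂ) (h : A = U * Vᴴ) :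
    nuclearNorm A ≤ (frobNorm U ^ 2 + frobNorm V ^ 2) / 2 := by
  obtain ⟨W, s, hW, hW', hs, hB, hN⟩ := nn_svd A
  set B := A * W with hBdef
  set D : Matrix (Fin n) (Fin n) ℂ := diagonal (fun i => (((s i)⁻¹ : ℝ) : ℂ)) with hD
  have hDc : Dᴴ = D := nn_diag_conj _
  set Q := B * D with hQ
  have hQB : Qᴴ * B = diagonal (fun i => (s i : ℂ)) := by
    rw [hQ, conjTranspose_mul, Matrix.mul_assoc, hB, hDc, hD, diagonal_mul_diagonal]
    congr 1
    funext i
    push_cast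
    by_cases h0 : (s i : ℂ) = 0
    · simp [h0]
    · field_simp
  have hQQ : Q * (Qᴴ * Q) = Q := by
    have : Qᴴ * Q = diagonal (fun i => (s i : ℂ)) * D := by
      rw [← hQB, Matrix.mul_assoc]
    rw [this, hQ, Matrix.mul_assoc B, hD, diagonal_mul_diagonal, diagonal_mul_diagonal]
    congr 2
    funext i
    push_cast
    by_cases h0 : (s i : ℂ) = 0
    · simp [h0]
    · field_simp
  have hX : frobNorm (Qᴴ * U) ^ 2 ≤ frobNorm U ^ 2 := by
    have key : ((frobNorm (U - Q * (Qᴴ * U)) ^ 2 : ℝ) : ℂ)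
        = ((frobNorm U ^ 2 - frobNorm (Qᴴ * U) ^ 2 : ℝ) : ℂ) := by
      rw [Complex.ofReal_sub, nn_frob_sq, nn_frob_sq, nn_frob_sq, ← trace_sub]
      congr 1
      have e : Qᴴ * (Q * (Qᴴ * U)) = Qᴴ * U := by
        have := congrArg conjTranspose hQQ
        rw [conjTranspose_mul, conjTranspose_mul, conjTranspose_conjTranspose] at this
        rw [← Matrix.mul_assoc, ← Matrix.mul_assoc, this]
      simp only [conjTranspose_sub, conjTranspose_mul, conjTranspose_conjTranspose,
        Matrix.sub_mul, Matrix.mul_sub, Matrix.mul_assoc, e]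
      abel
    have key' := Complex.ofReal_injective key
    have := sq_nonneg (frobNorm (U - Q * (Qᴴ * U)))
    linarith
  have hY : frobNorm (Wᴴ * V) ^ 2 = frobNorm V ^ 2 := by
    apply Complex.ofReal_injective
    rw [nn_frob_sq, nn_frob_sq, conjTranspose_mul, conjTranspose_conjTranspose, Matrix.mul_assoc,
      ← Matrix.mul_assoc W, hW', Matrix.one_mul]
  have hT : (((Wᴴ * V)ᴴ * (Qᴴ * U)).trace) = ((∑ i, s i : ℝ) : ℂ) := by
    rw [trace_mul_comm, conjTranspose_mul Wᴴ V, conjTranspose_conjTranspose, Matrix.mul_assoc,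
      ← Matrix.mul_assoc U, ← h, hQB, trace_diagonal]
    push_cast
    rfl
  have hT' : (((Qᴴ * U)ᴴ * (Wᴴ * V)).trace) = ((∑ i, s i : ℝ) : ℂ) := by
    have := congrArg star hT
    rw [← trace_conjTranspose, conjTranspose_mul, conjTranspose_conjTranspose] at this
    rw [this]
    exact Complex.conj_ofReal _
  have key : ((frobNorm (Qᴴ * U - Wᴴ * V) ^ 2 : ℝ) : ℂ)
      = ((frobNorm (Qᴴ * U) ^ 2 + frobNorm (Wᴴ * V) ^ 2 - 2 * ∑ i, s i : ℝ) : ℂ) := by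
    rw [Complex.ofReal_sub, Complex.ofReal_add, Complex.ofReal_mul, nn_frob_sq, nn_frob_sq,
      nn_frob_sq, conjTranspose_sub, Matrix.sub_mul, Matrix.mul_sub, Matrix.mul_sub, trace_sub,
      trace_sub, trace_sub, hT, hT']
    push_cast
    ring
  have key' := Complex.ofReal_injective key
  have := sq_nonneg (frobNorm (Qᴴ * U - Wᴴ * V))
  rw [hN]
  linarith

open scoped ComplexOrder in
theorem nn_attain {m n : ℕ} (A : Matrix (Fin m) (Fin n) ℂ) :
    ∃ (U : Matrix (Fin m) (Fin n) ℂ) (V : Matrix (Fin n) (Fin n) ℂ),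
        A = U * Vᴴ ∧ nuclearNorm A = (frobNorm U ^ 2 + frobNorm V ^ 2) / 2 := by
  obtain ⟨W, s, hW, hW', hs, hB, hN⟩ := nn_svd A
  set r : Fin n → ℝ := fun i => Real.sqrt (s i) with hr
  have hrs : ∀ i, (s i : ℂ) = (r i : ℂ) ^ 2 := fun i => by
    exact_mod_cast (Real.sq_sqrt (hs i)).symm
  set R : Matrix (Fin n) (Fin n) ℂ := diagonal (fun i => ((r i : ℝ) : ℂ)) with hR
  set D : Matrix (Fin n) (Fin n) ℂ := diagonal (fun i => (((r i)⁻¹ : ℝ) : ℂ)) with hD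
  have hRc : Rᴴ = R := nn_diag_conj _
  have hDc : Dᴴ = D := nn_diag_conj _
  have hBE : A * W * (1 - D * R) = 0 := by
    rw [← conjTranspose_mul_self_eq_zero, conjTranspose_mul, Matrix.mul_assoc,
      ← Matrix.mul_assoc _ (A * W), hB]
    have : diagonal (fun i => (s i : ℂ) ^ 2) * (1 - D * R) = 0 := by
      rw [hD, hR, Matrix.mul_sub, diagonal_mul_diagonal, diagonal_mul_diagonal, Matrix.mul_one,
        sub_eq_zero]
      congr 1
      funext i
      rw [hrs]
      push_cast
      by_cases h0 : (r i : ℂ) = 0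
      · simp [h0]
      · field_simp
    rw [this, Matrix.mul_zero]
  refine ⟨A * W * D, W * R, ?_, ?_⟩
  · rw [Matrix.mul_sub, sub_eq_zero, Matrix.mul_one] at hBE
    rw [conjTranspose_mul, hRc, Matrix.mul_assoc, ← Matrix.mul_assoc D, ← Matrix.mul_assoc (A * W),
      ← hBE, Matrix.mul_assoc, hW', Matrix.mul_one]
  · have h1 : frobNorm (A * W * D) ^ 2 = ∑ i, s i := by
      apply Complex.ofReal_injective
      rw [nn_frob_sq, conjTranspose_mul, Matrix.mul_assoc, ← Matrix.mul_assoc _ (A * W), hB, hDc,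
        hD, diagonal_mul_diagonal, diagonal_mul_diagonal, trace_diagonal, Complex.ofReal_sum]
      refine Finset.sum_congr rfl fun i _ => ?_
      rw [hrs]
      push_cast
      by_cases h0 : (r i : ℂ) = 0
      · simp [h0]
      · field_simp
    have h2 : frobNorm (W * R) ^ 2 = ∑ i, s i := by
      apply Complex.ofReal_injective
      rw [nn_frob_sq, conjTranspose_mul, Matrix.mul_assoc, ← Matrix.mul_assoc _ W, hW,
        Matrix.one_mul, hRc, hR, diagonal_mul_diagonal, trace_diagonal, Complex.ofReal_sum]
      refine Finset.sum_congr rfl fun i _ => ?_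
      rw [hrs, sq]
    rw [h1, h2, hN]
    ring

theorem nn_attain_pos {m n : ℕ} (A : Matrix (Fin m) (Fin n) ℂ) :
    ∃ p : ℕ, 0 < p ∧ ∃ (U : Matrix (Fin m) (Fin p) ℂ) (V : Matrix (Fin n) (Fin p) ℂ),
        A = U * Vᴴ ∧ nuclearNorm A = (frobNorm U ^ 2 + frobNorm V ^ 2) / 2 := by
  rcases Nat.eq_zero_or_pos n with rfl | hn
  · refine ⟨1, one_pos, 0, 0, ?_, ?_⟩
    · ext i j
      exact j.elim0
    · simp [nuclearNorm, frobNorm]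
  · exact ⟨n, hn, nn_attain A⟩

/-- **Variational characterization of the nuclear norm.**
(i) For every factorization `A = U * Vᴴ` (with `p ≥ 1` columns),
`‖A‖_* ≤ (‖U‖_F² + ‖V‖_F²)/2`; (ii) some factorization attains equality;
consequently `‖A‖_*` is the minimum of `(‖U‖_F² + ‖V‖_F²)/2` over all
factorizations `A = U * Vᴴ`. -/
theorem nuclearNorm_variational (m n : ℕ) (A : Matrix (Fin m) (Fin n) ℂ) :
    (∀ p : ℕ, 0 < p → ∀ (U : Matrix (Fin m) (Fin p) ℂ) (V : Matrix (Fin n) (Fin p) ℂ),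
        A = U * Vᴴ → nuclearNorm A ≤ (frobNorm U ^ 2 + frobNorm V ^ 2) / 2) ∧
    (∃ p : ℕ, 0 < p ∧ ∃ (U : Matrix (Fin m) (Fin p) ℂ) (V : Matrix (Fin n) (Fin p) ℂ),
        A = U * Vᴴ ∧ nuclearNorm A = (frobNorm U ^ 2 + frobNorm V ^ 2) / 2) ∧
    IsLeast
      {x : ℝ | ∃ p : ℕ, 0 < p ∧
        ∃ (U : Matrix (Fin m) (Fin p) ℂ) (V : Matrix (Fin n) (Fin p) ℂ),
          A = U * Vᴴ ∧ x = (frobNorm U ^ 2 + frobNorm V ^ 2) / 2}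
      (nuclearNorm A) := by
  refine ⟨fun p _ U V h => nn_upper A U V h, nn_attain_pos A, nn_attain_pos A, ?_⟩
  rintro x ⟨p, _, U, V, h, rfl⟩
  exact nn_upper A U V h
end
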